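/- Let G be a finite simple cubic graph containing the graph K as a subgraph, i.e., there exist five pairwise distinct vertices v1, v2, v3, v4, v5 of G such that v1v2, v1v3, v2v4, v2v5, v3v4, v3v5, v4v5 are all edges of G, and let w be the third neighbor of v1 in G (so w ∉ {v2, v3, v4, v5}). Then in any normal 7-edge-coloring c of G, the color of the edge v4v5 equals the color of the edge v1w. -/

import Mathlib

open SimpleGraph

/-- A proper edge-coloring: distinct edges of `G` sharing an endpoint get different colors. -/
def IsProperEdgeColoring {V C : Type*} (G : SimpleGraph V) (c : Sym2 V → C) : Prop :=
  ∀ e ∈ G.edgeSet, ∀ f ∈ G.edgeSet, e ≠ f → (∃ v : V, v ∈ e ∧ v ∈ f) → c e ≠ c f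

/-- `S_c(v)`: the set of colors appearing on edges incident to `v`. -/
def colorSet {V C : Type*} (G : SimpleGraph V) (c : Sym2 V → C) (v : V) : Set C :=
  c '' G.incidenceSet v

/-- The edge `uv` is poor: exactly 3 colors appear around its endpoints. -/
def IsPoorAt {V C : Type*} (G : SimpleGraph V) (c : Sym2 V → C) (u v : V) : Prop :=
  (colorSet G c u ∪ colorSet G c v).ncard = 3

/-- The edge `uv` is rich: exactly 5 colors appear around its endpoints. -/
def IsRichAt {V C : Type*} (G : SimpleGraph V) (c : Sym2 V → C) (u v : V) : Prop :=
  (colorSet G c u ∪ colorSet G c v).ncard = 5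

/-- A normal edge-coloring: a proper edge-coloring in which every edge is poor or rich. -/
def IsNormalEdgeColoring {V C : Type*} (G : SimpleGraph V) (c : Sym2 V → C) : Prop :=
  IsProperEdgeColoring G c ∧
    ∀ u v : V, G.Adj u v → IsPoorAt G c u v ∨ IsRichAt G c u v

/-- A nowhere-zero flow with values in an additive group `M` (all elements self-inverse in our
applications): nonzero on every edge, and at every vertex the values on incident edges sum to 0. -/
def IsNowhereZeroFlow {V M : Type*} [AddCommMonoid M] (G : SimpleGraph V)
    (θ : Sym2 V → M) : Prop :=
  (∀ e ∈ G.edgeSet, θ e ≠ 0) ∧ ∀ v : V, ∑ᶠ e ∈ G.incidenceSet v, θ e = 0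

/-- `G` is `k`-edge-connected: connected, and still connected after deleting any set of
fewer than `k` edges. -/
def EdgeConnGe {V : Type*} (G : SimpleGraph V) (k : ℕ) : Prop :=
  G.Connected ∧ ∀ s : Set (Sym2 V), s.ncard < k → (G.deleteEdges s).Connected

/-- `G` is cubic: every vertex has degree 3. -/
def IsCubic {V : Type*} (G : SimpleGraph V) : Prop :=
  ∀ v : V, (G.neighborSet v).ncard = 3

/-- `G` is bridgeless: no edge is a bridge. -/
def Bridgeless {V : Type*} (G : SimpleGraph V) : Prop :=
  ∀ e ∈ G.edgeSet, ¬ G.IsBridge e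

theorem aux_colorSet {V C : Type*} [Fintype V] (G : SimpleGraph V) (hG : IsCubic G) (c : Sym2 V → C)
    (v x y z : V) (hx : G.Adj v x) (hy : G.Adj v y) (hz : G.Adj v z)
    (hxy : x ≠ y) (hxz : x ≠ z) (hyz : y ≠ z) :
    colorSet G c v = {c s(v, x), c s(v, y), c s(v, z)} := by
  have hN : ({x, y, z} : Set V) = G.neighborSet v := by
    apply Set.eq_of_subset_of_ncard_le
    · rintro u (rfl | rfl | rfl) <;> assumption
    · rw [hG v, Set.ncard_eq_three.mpr ⟨x, y, z, hxy, hxz, hyz, rfl⟩]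
    · exact Set.toFinite _
  ext k
  constructor
  · rintro ⟨e, ⟨he, hv⟩, rfl⟩
    obtain ⟨u, rfl⟩ := Sym2.mem_iff_exists.mp hv
    have hu : u ∈ G.neighborSet v := he
    rw [← hN] at hu
    rcases hu with rfl | rfl | rfl <;> simp
  · rintro (rfl | rfl | rfl)
    · exact ⟨_, ⟨hx, by simp⟩, rfl⟩
    · exact ⟨_, ⟨hy, by simp⟩, rfl⟩
    · exact ⟨_, ⟨hz, by simp⟩, rfl⟩

theorem aux_card {C : Type*} (x y z s t : C) (hxy : x ≠ y) (hxz : x ≠ z) (hyz : y ≠ z)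
    (hxs : x ≠ s) (hxt : x ≠ t) (hst : s ≠ t)
    (h : (({x, y, z} : Set C) ∪ {x, s, t}).ncard = 3 ∨ (({x, y, z} : Set C) ∪ {x, s, t}).ncard = 5) :
    (y = s ∧ z = t) ∨ (y = t ∧ z = s) ∨ (y ≠ s ∧ y ≠ t ∧ z ≠ s ∧ z ≠ t) := by
  classical
  have e : (({x, y, z} : Set C) ∪ {x, s, t}) = (({x, y, z, s, t} : Finset C) : Set C) := by
    ext k; simp; tauto
  rw [e, Set.ncard_coe_finset] at h
  by_cases h1 : y = s <;> by_cases h2 : y = t <;> by_cases h3 : z = s <;> by_cases h4 : z = t <;>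
    grind

theorem aux_edge {V C : Type*} [Fintype V] (G : SimpleGraph V) (hG : IsCubic G) (c : Sym2 V → C)
    (hc : IsNormalEdgeColoring G c)
    (u v y z s t : V) (huv : G.Adj u v) (hy : G.Adj u y) (hz : G.Adj u z)
    (hs : G.Adj v s) (ht : G.Adj v t)
    (hvy : v ≠ y) (hvz : v ≠ z) (hyz : y ≠ z) (hus : u ≠ s) (hut : u ≠ t) (hst : s ≠ t) :
    (c s(u, y) = c s(v, s) ∧ c s(u, z) = c s(v, t)) ∨
    (c s(u, y) = c s(v, t) ∧ c s(u, z) = c s(v, s)) ∨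
    (c s(u, y) ≠ c s(v, s) ∧ c s(u, y) ≠ c s(v, t) ∧ c s(u, z) ≠ c s(v, s) ∧
      c s(u, z) ≠ c s(v, t)) := by
  have P : ∀ a p q : V, G.Adj a p → G.Adj a q → p ≠ q → c s(a, p) ≠ c s(a, q) := by
    intro a p q hp hq hpq
    exact hc.1 _ hp _ hq (fun hh => hpq (Sym2.congr_right.mp hh)) ⟨a, by simp, by simp⟩
  have h := hc.2 u v huv
  unfold IsPoorAt IsRichAt at h
  rw [aux_colorSet G hG c u v y z huv hy hz hvy hvz hyz,
    aux_colorSet G hG c v u s t huv.symm hs ht hus hut hst, Sym2.eq_swap (a := v) (b := u)] at h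
  refine aux_card _ _ _ _ _ (P u v y huv hy hvy) (P u v z huv hz hvz) (P u y z hy hz hyz) ?_ ?_
    (P v s t hs ht hst) h
  · rw [Sym2.eq_swap]; exact P v u s huv.symm hs hus
  · rw [Sym2.eq_swap]; exact P v u t huv.symm ht hut

theorem aux_final (p a b d e f g h : Fin 7)
    (e12 : (p = d ∧ b = e) ∨ (p = e ∧ b = d) ∨ (p ≠ d ∧ p ≠ e ∧ b ≠ d ∧ b ≠ e))
    (e13 : (p = f ∧ a = g) ∨ (p = g ∧ a = f) ∨ (p ≠ f ∧ p ≠ g ∧ a ≠ f ∧ a ≠ g))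
    (e24 : (a = f ∧ e = h) ∨ (a = h ∧ e = f) ∨ (a ≠ f ∧ a ≠ h ∧ e ≠ f ∧ e ≠ h))
    (e25 : (a = g ∧ d = h) ∨ (a = h ∧ d = g) ∨ (a ≠ g ∧ a ≠ h ∧ d ≠ g ∧ d ≠ h))
    (e34 : (b = d ∧ g = h) ∨ (b = h ∧ g = d) ∨ (b ≠ d ∧ b ≠ h ∧ g ≠ d ∧ g ≠ h))
    (e35 : (b = e ∧ f = h) ∨ (b = h ∧ f = e) ∨ (b ≠ e ∧ b ≠ h ∧ f ≠ e ∧ f ≠ h))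
    (e45 : (d = e ∧ f = g) ∨ (d = g ∧ f = e) ∨ (d ≠ e ∧ d ≠ g ∧ f ≠ e ∧ f ≠ g))
    (p1 : p ≠ a) (p2 : p ≠ b) (p3 : a ≠ b) (p4 : a ≠ d) (p5 : a ≠ e) (p6 : d ≠ e)
    (p7 : b ≠ f) (p8 : b ≠ g) (p9 : f ≠ g) (q1 : d ≠ f) (q2 : d ≠ h) (q3 : f ≠ h)
    (q4 : e ≠ g) (q5 : e ≠ h) (q6 : g ≠ h) : h = p := by
  by_contra hp
  have ah : a ≠ h := by grind
  have bh : b ≠ h := by grind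
  have ef : e ≠ f := by grind
  have dg : d ≠ g := by grind
  have N : [p, a, b, d, e, f, g, h].Nodup := by
    simp only [List.nodup_cons, List.mem_cons, List.not_mem_nil, not_or, or_false]
    grind
  have := N.length_le_card
  simp at this

theorem stmt_7 {V : Type*} [Fintype V] (G : SimpleGraph V) (hG : IsCubic G)
    (v₁ v₂ v₃ v₄ v₅ : V) (hdist : ([v₁, v₂, v₃, v₄, v₅] : List V).Nodup)
    (h12 : G.Adj v₁ v₂) (h13 : G.Adj v₁ v₃) (h24 : G.Adj v₂ v₄) (h25 : G.Adj v₂ v₅)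
    (h34 : G.Adj v₃ v₄) (h35 : G.Adj v₃ v₅) (h45 : G.Adj v₄ v₅)
    (w : V) (hw : G.Adj v₁ w)
    (hw2 : w ≠ v₂) (hw3 : w ≠ v₃) (hw4 : w ≠ v₄) (hw5 : w ≠ v₅)
    (c : Sym2 V → Fin 7) (hc : IsNormalEdgeColoring G c) :
    c s(v₄, v₅) = c s(v₁, w) := by
  simp only [List.nodup_cons, List.mem_cons, List.not_mem_nil, not_or, or_false] at hdist
  obtain ⟨⟨n12, n13, n14, n15⟩, ⟨n23, n24, n25⟩, ⟨n34, n35⟩, n45, -⟩ := hdist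
  have P : ∀ a p q : V, G.Adj a p → G.Adj a q → p ≠ q → c s(a, p) ≠ c s(a, q) := by
    intro a p q hp hq hpq
    exact hc.1 _ hp _ hq (fun hh => hpq (Sym2.congr_right.mp hh)) ⟨a, by simp, by simp⟩
  have E := aux_edge G hG c hc
  have e12 := E v₁ v₂ w v₃ v₄ v₅ h12 hw h13 h24 h25 hw2.symm n23 hw3 n14 n15 n45
  have e13 := E v₁ v₃ w v₂ v₄ v₅ h13 hw h12 h34 h35 hw3.symm (Ne.symm n23) hw2 n14 n15 n45
  have e24 := E v₂ v₄ v₁ v₅ v₃ v₅ h24 h12.symm h25 h34.symm h45 (Ne.symm n14) n45 n15 n23 n25 n35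
  have e25 := E v₂ v₅ v₁ v₄ v₃ v₄ h25 h12.symm h24 h35.symm h45.symm (Ne.symm n15) (Ne.symm n45) n14 n23 n24 n34
  have e34 := E v₃ v₄ v₁ v₅ v₂ v₅ h34 h13.symm h35 h24.symm h45 (Ne.symm n14) n45 n15 (Ne.symm n23) n35 n25
  have e35 := E v₃ v₅ v₁ v₄ v₂ v₄ h35 h13.symm h34 h25.symm h45.symm (Ne.symm n15) (Ne.symm n45) n14 (Ne.symm n23) n34 n24
  have e45 := E v₄ v₅ v₂ v₃ v₂ v₃ h45 h24.symm h34.symm h25.symm h35.symm (Ne.symm n25) (Ne.symm n35) n23 (Ne.symm n24) (Ne.symm n34) n23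
  have p1 := P v₁ w v₂ hw h12 hw2
  have p2 := P v₁ w v₃ hw h13 hw3
  have p3 := P v₁ v₂ v₃ h12 h13 n23
  have p4 := P v₂ v₁ v₄ h12.symm h24 n14
  have p5 := P v₂ v₁ v₅ h12.symm h25 n15
  have p6 := P v₂ v₄ v₅ h24 h25 n45
  have p7 := P v₃ v₁ v₄ h13.symm h34 n14
  have p8 := P v₃ v₁ v₅ h13.symm h35 n15
  have p9 := P v₃ v₄ v₅ h34 h35 n45
  have q1 := P v₄ v₂ v₃ h24.symm h34.symm n23
  have q2 := P v₄ v₂ v₅ h24.symm h45 n25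
  have q3 := P v₄ v₃ v₅ h34.symm h45 n35
  have q4 := P v₅ v₂ v₃ h25.symm h35.symm n23
  have q5 := P v₅ v₂ v₄ h25.symm h45.symm n24
  have q6 := P v₅ v₃ v₄ h35.symm h45.symm n34
  simp only [Sym2.eq_swap (a := v₂) (b := v₁), Sym2.eq_swap (a := v₃) (b := v₁),
    Sym2.eq_swap (a := v₄) (b := v₂), Sym2.eq_swap (a := v₄) (b := v₃),
    Sym2.eq_swap (a := v₅) (b := v₂), Sym2.eq_swap (a := v₅) (b := v₃),
    Sym2.eq_swap (a := v₅) (b := v₄)] at e12 e13 e24 e25 e34 e35 e45 p1 p2 p3 p4 p5 p6 p7 p8 p9 q1 q2 q3 q4 q5 q6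
  exact aux_final _ _ _ _ _ _ _ _ e12 e13 e24 e25 e34 e35 e45 p1 p2 p3 p4 p5 p6 p7 p8 p9 q1 q2 q3 q4 q5 q6
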